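/- Let H = (H₁,…,Hₙ) be an n-tuple of homogeneous polynomials of degree d ≥ 2 in z₁,…,zₙ over ℂ, and let F = z + H, i.e. Fᵢ = zᵢ + Hᵢ. If the Jacobian matrix JH = (∂Hᵢ/∂zⱼ) satisfies (JH)² = 0 (as a matrix over the polynomial ring), then G = z − H is the inverse of F under composition: Fᵢ(G₁,…,Gₙ) = zᵢ and Gᵢ(F₁,…,Fₙ) = zᵢ for all i. -/

import Mathlib

/-!
Let `D = ∑ⱼ Hⱼ ∂/∂zⱼ`, the derivation with `D zⱼ = Hⱼ`. Euler's identity reads `JH · z = d H`, so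
`d (JH · H) = (JH)² · z = 0`; that is, `D Hᵢ = 0`. Hence the flow of `D` is `z ↦ z + t H`, and the
constants `Hᵢ` of `D` are invariant under it: `Hᵢ(z + t H) = Hᵢ(z)`. Taking `t = ±1` shows that
`z + H` and `z - H` undo each other. The flow is handled algebraically, as the homomorphism
`p ↦ p(z + T H)` into polynomials in `T`, which satisfies the differential equation `d/dT = D`.
-/

instance {R σ : Type*} [CommSemiring R] [IsAddTorsionFree R] :
    IsAddTorsionFree (MvPolynomial σ R) where
  nsmul_right_injective n hn p q hpq := by
    ext m
    refine nsmul_right_injective hn ?_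
    simpa only [MvPolynomial.coeff_smul] using congrArg (MvPolynomial.coeff m) hpq

section CoeffDerivation

open Polynomial

variable {R A : Type*} [CommRing R] [CommRing A] [Algebra R A]

/-- The derivation of `A[T]` that applies a derivation of `A` to each coefficient. This is
`Derivation.mapCoeffs` with values in `A[T]` instead of `PolynomialModule A A`. -/
noncomputable def coeffDerivation (D : Derivation R A A) : Derivation R A[X] A[X] :=
  PolynomialModule.equivPolynomialSelf.compDer D.mapCoeffs

@[simp]
theorem coeff_coeffDerivation (D : Derivation R A A) (f : A[X]) (k : ℕ) :
    (coeffDerivation D f).coeff k = D (f.coeff k) :=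
  rfl

@[simp]
theorem coeffDerivation_C (D : Derivation R A A) (a : A) : coeffDerivation D (C a) = C (D a) := by
  ext k
  simp [coeff_C, apply_ite D]

@[simp]
theorem coeffDerivation_X (D : Derivation R A A) : coeffDerivation D (X : A[X]) = 0 := by
  ext k
  simp [coeff_X, apply_ite D]

theorem eq_C_of_derivative_eq_coeffDerivation [IsAddTorsionFree A] {D : Derivation R A A}
    {f : A[X]} (hf : derivative f = coeffDerivation D f) (h₀ : D (f.coeff 0) = 0) :
    f = C (f.coeff 0) := by
  have coeff_succ (k : ℕ) (hk : D (f.coeff k) = 0) : f.coeff (k + 1) = 0 := by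
    have h : (k + 1) • f.coeff (k + 1) = D (f.coeff k) := by
      rw [← coeff_coeffDerivation, ← hf, coeff_derivative, nsmul_eq_mul, mul_comm, Nat.cast_succ]
    exact (nsmul_eq_zero_iff_right k.succ_ne_zero).mp (h.trans hk)
  have map_coeff (k : ℕ) : D (f.coeff k) = 0 := by
    induction k with
    | zero => exact h₀
    | succ k ih => rw [coeff_succ k ih, map_zero]
  ext (_ | k)
  · rw [coeff_C_zero]
  · rw [coeff_succ k (map_coeff k), coeff_C_succ]

end CoeffDerivation

section LinearFlow

open MvPolynomial

variable {R σ : Type*} [CommRing R]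

/-- The substitution `zⱼ ↦ zⱼ + T · D zⱼ`, with values in polynomials in the time variable `T`.
It is the flow of `D` when the second derivatives `D (D zⱼ)` vanish. -/
noncomputable def linearFlow (D : Derivation R (MvPolynomial σ R) (MvPolynomial σ R)) :
    MvPolynomial σ R →ₐ[R] Polynomial (MvPolynomial σ R) :=
  aeval fun j => Polynomial.C (X j) + Polynomial.X * Polynomial.C (D (X j))

variable {D : Derivation R (MvPolynomial σ R) (MvPolynomial σ R)}

theorem eval_linearFlow (b p : MvPolynomial σ R) :
    (linearFlow D p).eval b = aeval (fun j => X j + b * D (X j)) p := by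
  suffices h : ((Polynomial.aeval b).restrictScalars R).comp (linearFlow D) =
      aeval fun j => X j + b * D (X j) from
    DFunLike.congr_fun h p
  ext1 j
  simp [linearFlow, mul_comm b]

theorem coeff_zero_linearFlow (p : MvPolynomial σ R) : (linearFlow D p).coeff 0 = p := by
  simp [Polynomial.coeff_zero_eq_eval_zero, eval_linearFlow]

theorem derivative_linearFlow (hD : ∀ j, D (D (X j)) = 0) (p : MvPolynomial σ R) :
    (linearFlow D p).derivative = coeffDerivation D (linearFlow D p) := by
  have eqOn_generators : Set.EqOn (Polynomial.derivative'.restrictScalars R) (coeffDerivation D)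
      (Set.range fun j => Polynomial.C (X j) + Polynomial.X * Polynomial.C (D (X j))) := by
    rintro _ ⟨j, rfl⟩
    simp [hD]
  refine Derivation.eqOn_adjoin eqOn_generators ?_
  rw [Algebra.adjoin_range_eq_range_aeval]
  exact ⟨p, rfl⟩

theorem aeval_X_add_mul_eq_self [IsAddTorsionFree R] (hD : ∀ j, D (D (X j)) = 0)
    {p : MvPolynomial σ R} (hp : D p = 0) (b : MvPolynomial σ R) :
    aeval (fun j => X j + b * D (X j)) p = p := by
  have flow_eq : linearFlow D p = Polynomial.C p := by
    simpa only [coeff_zero_linearFlow] using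
      eq_C_of_derivative_eq_coeffDerivation (derivative_linearFlow hD p)
        (by rwa [coeff_zero_linearFlow])
  rw [← eval_linearFlow, flow_eq, Polynomial.eval_C]

end LinearFlow

section Jacobian

open Matrix MvPolynomial

variable {R σ ι : Type*} [CommSemiring R]

/-- The Jacobian matrix `(∂Hᵢ/∂zⱼ)` of a family of polynomials. -/
noncomputable def jacobianMatrix (H : ι → MvPolynomial σ R) : Matrix ι σ (MvPolynomial σ R) :=
  Matrix.of fun i j => pderiv j (H i)

variable [Fintype σ]

theorem jacobianMatrix_mulVec_X {H : ι → MvPolynomial σ R} {d : ℕ}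
    (hH : ∀ i, (H i).IsHomogeneous d) : jacobianMatrix H *ᵥ X = d • H := by
  ext1 i
  simpa only [mul_comm (X _)] using! (hH i).sum_X_mul_pderiv

theorem mkDerivation_apply_eq_sum_mul_pderiv (V : σ → MvPolynomial σ R) (p : MvPolynomial σ R) :
    mkDerivation R V p = ∑ j, V j * pderiv j p := by
  classical
  have sum_apply (q : MvPolynomial σ R) :
      (∑ j, V j • pderiv j : Derivation R (MvPolynomial σ R) (MvPolynomial σ R)) q =
        ∑ j, V j * pderiv j q := by
    rw [← Derivation.coeFnAddMonoidHom_apply, map_sum, Finset.sum_apply]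
    rfl
  have eq_sum : mkDerivation R V = ∑ j, V j • pderiv j :=
    derivation_ext fun i => by simp [sum_apply, mkDerivation_X, pderiv_X, Pi.single_apply]
  rw [eq_sum, sum_apply]

theorem mkDerivation_apply_eq_jacobianMatrix_mulVec (V : σ → MvPolynomial σ R)
    (H : ι → MvPolynomial σ R) (i : ι) :
    mkDerivation R V (H i) = (jacobianMatrix H *ᵥ V) i := by
  simp only [mkDerivation_apply_eq_sum_mul_pderiv, jacobianMatrix, mulVec, dotProduct, of_apply,
    mul_comm]

theorem jacobianMatrix_mulVec_self_eq_zero [IsAddTorsionFree R] {H : σ → MvPolynomial σ R} {d : ℕ}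
    (hd : d ≠ 0) (hH : ∀ i, (H i).IsHomogeneous d)
    (hJ : jacobianMatrix H * jacobianMatrix H = 0) : jacobianMatrix H *ᵥ H = 0 := by
  have h : d • (jacobianMatrix H *ᵥ H) = 0 := by
    rw [← mulVec_smul, ← jacobianMatrix_mulVec_X hH, mulVec_mulVec, hJ, zero_mulVec]
  exact (nsmul_eq_zero_iff_right hd).mp h

end Jacobian

section Inverse

open MvPolynomial

variable {R σ : Type*} [CommRing R] [IsAddTorsionFree R] [Fintype σ] {H : σ → MvPolynomial σ R}
  {d : ℕ}

theorem aeval_X_add_mul_eq_self_of_jacobianMatrix_mul_self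
    (hd : d ≠ 0) (hH : ∀ i, (H i).IsHomogeneous d)
    (hJ : jacobianMatrix H * jacobianMatrix H = 0) (b : MvPolynomial σ R) (i : σ) :
    aeval (fun j => X j + b * H j) (H i) = H i := by
  have hD (j : σ) : mkDerivation R H (H j) = 0 := by
    rw [mkDerivation_apply_eq_jacobianMatrix_mulVec,
      jacobianMatrix_mulVec_self_eq_zero hd hH hJ, Pi.zero_apply]
  simpa only [mkDerivation_X] using
    aeval_X_add_mul_eq_self (D := mkDerivation R H) (by simpa only [mkDerivation_X] using hD)
      (hD i) b

theorem stmt19_general (hd : d ≠ 0) (hH : ∀ i, (H i).IsHomogeneous d)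
    (hJ : jacobianMatrix H * jacobianMatrix H = 0) (i : σ) :
    aeval (fun j => X j - H j) (X i + H i) = X i ∧
      aeval (fun j => X j + H j) (X i - H i) = X i := by
  have invariant := aeval_X_add_mul_eq_self_of_jacobianMatrix_mul_self hd hH hJ
  have forward : aeval (fun j => X j + H j) (H i) = H i := by
    simpa only [one_mul] using invariant 1 i
  have backward : aeval (fun j => X j - H j) (H i) = H i := by
    simpa only [neg_one_mul, ← sub_eq_add_neg] using invariant (-1) i
  constructor
  · rw [map_add, aeval_X, backward, sub_add_cancel]
  · rw [map_sub, aeval_X, forward, add_sub_cancel_right]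

end Inverse

/-- if `H` is an `n`-tuple of homogeneous polynomials of degree `d ≥ 2`
with `(JH)² = 0`, then `G = z − H` is the compositional inverse of `F = z + H`. -/
theorem stmt19 {n : ℕ} (hn : 0 < n) (d : ℕ) (hd : 2 ≤ d)
    (H : Fin n → MvPolynomial (Fin n) ℂ)
    (hH : ∀ i, (H i).IsHomogeneous d)
    (hJH : (Matrix.of fun i j => MvPolynomial.pderiv j (H i)) *
        (Matrix.of fun i j => MvPolynomial.pderiv j (H i)) = 0) :
    ∀ i, MvPolynomial.aeval (fun j => MvPolynomial.X j - H j)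
          (MvPolynomial.X i + H i) = MvPolynomial.X i ∧
      MvPolynomial.aeval (fun j => MvPolynomial.X j + H j)
          (MvPolynomial.X i - H i) = MvPolynomial.X i :=
  stmt19_general (by omega) hH hJH
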